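/- Let R be a ring and t a central element of R with t² = 0, and let R̄ = R/(t) be the quotient by the two-sided ideal generated by t. Let P be a cochain complex of left R-modules such that each P^j is a projective R-module, and suppose that the reduction P ⧸ tP is homotopy projective over R̄, i.e. for every acyclic cochain complex C of R̄-modules the Hom-complex Hom_{R̄}(P ⧸ tP, C) is acyclic. Then for every cochain complex M of left R-modules such that both the subcomplex tM and the quotient complex M ⧸ tM are acyclic, the Hom-complex Hom_R(P, M) is acyclic; in particular, every morphism of cochain complexes P → M is null-homotopic via an R-linear chain homotopy. -/

import Mathlib

universe u

section Defs

variable {R : Type u} [Ring R]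

/-- Scalar multiplication by a central element `t` of a ring `R`, as an `R`-linear
endomorphism of a left `R`-module `M`. Its range is the submodule `t M`. -/
def centralSmul (t : R) (ht : t ∈ Subring.center R)
    (M : Type u) [AddCommGroup M] [Module R M] : M →ₗ[R] M where
  toFun m := t • m
  map_add' x y := smul_add t x y
  map_smul' b m := by
    simp only [RingHom.id_apply, smul_smul]
    rw [Subring.mem_center_iff.mp ht b]

@[simp] lemma centralSmul_apply (t : R) (ht : t ∈ Subring.center R)
    (M : Type u) [AddCommGroup M] [Module R M] (x : M) :
    centralSmul t ht M x = t • x := rfl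

/-- Transport along an equality of indices, as a linear map. -/
def lcast (C : ℤ → Type u) [∀ j, AddCommGroup (C j)] [∀ j, Module R (C j)]
    {a b : ℤ} (h : a = b) : C a →ₗ[R] C b := by subst h; exact LinearMap.id

/-- The differential of the Hom-complex `Hom_R(P, C)` of two cochain complexes of
`R`-modules: its degree-`n` term is `∏ j, Hom_R(P^j, C^(j+n))` and the differential is
`f ↦ d_C ∘ f - (-1)^n f ∘ d_P`. -/
def homDiff {P C : ℤ → Type u}
    [∀ j, AddCommGroup (P j)] [∀ j, Module R (P j)]
    [∀ j, AddCommGroup (C j)] [∀ j, Module R (C j)]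
    (dP : ∀ j : ℤ, P j →ₗ[R] P (j + 1)) (dC : ∀ j : ℤ, C j →ₗ[R] C (j + 1))
    (n : ℤ) (f : ∀ j : ℤ, P j →ₗ[R] C (j + n)) :
    ∀ j : ℤ, P j →ₗ[R] C (j + (n + 1)) :=
  fun j =>
    ((lcast C (by omega : j + n + 1 = j + (n + 1))).comp ((dC (j + n)).comp (f j))) -
      (((Int.negOnePow n : ℤˣ) : ℤ) •
        ((lcast C (by omega : j + 1 + n = j + (n + 1))).comp ((f (j + 1)).comp (dP j))))

/-- The degree-`j` term `P^j ⧸ t P^j` of the reduction `P ⧸ tP` of a complex. -/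
def redMod (t : R) (ht : t ∈ Subring.center R)
    (P : ℤ → Type u) [∀ j, AddCommGroup (P j)] [∀ j, Module R (P j)] (j : ℤ) :=
  P j ⧸ LinearMap.range (centralSmul t ht (P j))

noncomputable instance (t : R) (ht : t ∈ Subring.center R)
    (P : ℤ → Type u) [∀ j, AddCommGroup (P j)] [∀ j, Module R (P j)] (j : ℤ) :
    AddCommGroup (redMod t ht P j) :=
  inferInstanceAs (AddCommGroup (P j ⧸ LinearMap.range (centralSmul t ht (P j))))

noncomputable instance (t : R) (ht : t ∈ Subring.center R)
    (P : ℤ → Type u) [∀ j, AddCommGroup (P j)] [∀ j, Module R (P j)] (j : ℤ) :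
    Module R (redMod t ht P j) :=
  inferInstanceAs (Module R (P j ⧸ LinearMap.range (centralSmul t ht (P j))))

/-- The differential induced on the reduction `P ⧸ tP`. -/
def redDiff (t : R) (ht : t ∈ Subring.center R)
    (P : ℤ → Type u) [∀ j, AddCommGroup (P j)] [∀ j, Module R (P j)]
    (dP : ∀ j : ℤ, P j →ₗ[R] P (j + 1)) (j : ℤ) :
    redMod t ht P j →ₗ[R] redMod t ht P (j + 1) :=
  Submodule.mapQ _ _ (dP j) (by
    rintro x ⟨y, rfl⟩
    exact LinearMap.mem_range.mpr ⟨dP j y, by simp⟩)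

end Defs

/-!
If `C` is killed by `t`, every map `P → C` factors uniquely through `P ⧸ tP`, so
`Hom(P, C) = Hom(P ⧸ tP, C)`, which for acyclic `C` is acyclic because `P ⧸ tP` is homotopy
projective. As `t² = 0`, both ends of `0 → tM → M → M ⧸ tM → 0` are killed by `t`. Since `P` is
termwise projective, `Hom(P, -)` keeps this sequence exact, and an extension of acyclic
complexes is acyclic.
-/

section Transport

variable {R : Type u} [Ring R] {C D : ℤ → Type u}
  [∀ j, AddCommGroup (C j)] [∀ j, Module R (C j)]
  [∀ j, AddCommGroup (D j)] [∀ j, Module R (D j)]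

lemma lcast_self {a : ℤ} (h : a = a) (x : C a) : lcast (R := R) C h x = x := rfl

lemma lcast_lcast {a b c : ℤ} (hab : a = b) (hbc : b = c) (x : C a) :
    lcast (R := R) C hbc (lcast (R := R) C hab x) = lcast (R := R) C (hab.trans hbc) x := by
  subst hab hbc
  rfl

lemma map_lcast (F : ∀ j : ℤ, C j →ₗ[R] D j) {a b : ℤ} (h : a = b) (x : C a) :
    F b (lcast (R := R) C h x) = lcast (R := R) D h (F a x) := by
  subst h
  rfl

lemma diff_lcast (dC : ∀ j : ℤ, C j →ₗ[R] C (j + 1)) {a b : ℤ} (h : a = b) (x : C a) :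
    dC b (lcast (R := R) C h x) = lcast (R := R) C (congrArg (· + 1) h) (dC a x) := by
  subst h
  rfl

end Transport

section HomComplex

variable {R : Type u} [Ring R] {P Q A B C : ℤ → Type u}
  [∀ j, AddCommGroup (P j)] [∀ j, Module R (P j)]
  [∀ j, AddCommGroup (Q j)] [∀ j, Module R (Q j)]
  [∀ j, AddCommGroup (A j)] [∀ j, Module R (A j)]
  [∀ j, AddCommGroup (B j)] [∀ j, Module R (B j)]
  [∀ j, AddCommGroup (C j)] [∀ j, Module R (C j)]
  {dP : ∀ j : ℤ, P j →ₗ[R] P (j + 1)} {dQ : ∀ j : ℤ, Q j →ₗ[R] Q (j + 1)}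
  {dA : ∀ j : ℤ, A j →ₗ[R] A (j + 1)} {dB : ∀ j : ℤ, B j →ₗ[R] B (j + 1)}
  {dC : ∀ j : ℤ, C j →ₗ[R] C (j + 1)}

/-- The maps `dC` are the differential of a cochain complex: `d² = 0`. -/
def IsCochainComplex (dC : ∀ j : ℤ, C j →ₗ[R] C (j + 1)) : Prop :=
  ∀ (j : ℤ) (x : C j), dC (j + 1) (dC j x) = 0

/-- Every cocycle is a coboundary. Since `j` ranges over all of `ℤ`, stating this in degrees
`j + 1` avoids transport along `j - 1 + 1 = j`. -/
def IsAcyclic (dC : ∀ j : ℤ, C j →ₗ[R] C (j + 1)) : Prop :=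
  ∀ (j : ℤ) (x : C (j + 1)), dC (j + 1) x = 0 → ∃ y : C j, dC j y = x

/-- The family `F` is a morphism of cochain complexes. -/
def IsCochainMap (dP : ∀ j : ℤ, P j →ₗ[R] P (j + 1)) (dC : ∀ j : ℤ, C j →ₗ[R] C (j + 1))
    (F : ∀ j : ℤ, P j →ₗ[R] C j) : Prop :=
  ∀ (j : ℤ) (x : P j), F (j + 1) (dP j x) = dC j (F j x)

/-- Acyclicity of the Hom-complex `Hom_R(P, C)`, indexed as in `IsAcyclic`. -/
def IsHomAcyclic (dP : ∀ j : ℤ, P j →ₗ[R] P (j + 1))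
    (dC : ∀ j : ℤ, C j →ₗ[R] C (j + 1)) : Prop :=
  ∀ (n : ℤ) (f : ∀ j : ℤ, P j →ₗ[R] C (j + (n + 1))), homDiff dP dC (n + 1) f = 0 →
    ∃ g : ∀ j : ℤ, P j →ₗ[R] C (j + n), homDiff dP dC n g = f

/-- The map `Hom_R(P, A) → Hom_R(P, C)` induced by `F : A → C`, in degree `n`. -/
def postcomp (F : ∀ j : ℤ, A j →ₗ[R] C j) (n : ℤ) (f : ∀ j : ℤ, P j →ₗ[R] A (j + n)) :
    ∀ j : ℤ, P j →ₗ[R] C (j + n) :=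
  fun j => (F (j + n)).comp (f j)

/-- The map `Hom_R(P, C) → Hom_R(Q, C)` induced by `F : Q → P`, in degree `n`. -/
def precomp (F : ∀ j : ℤ, Q j →ₗ[R] P j) (n : ℤ) (f : ∀ j : ℤ, P j →ₗ[R] C (j + n)) :
    ∀ j : ℤ, Q j →ₗ[R] C (j + n) :=
  fun j => (f j).comp (F j)

lemma homDiff_apply (n : ℤ) (f : ∀ j : ℤ, P j →ₗ[R] C (j + n)) (j : ℤ) (x : P j) :
    homDiff dP dC n f j x =
      lcast (R := R) C (by omega : j + n + 1 = j + (n + 1)) (dC (j + n) (f j x)) -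
      ((Int.negOnePow n : ℤˣ) : ℤ) •
        lcast (R := R) C (by omega : j + 1 + n = j + (n + 1)) (f (j + 1) (dP j x)) := rfl

lemma homDiff_add (n : ℤ) (f g : ∀ j : ℤ, P j →ₗ[R] C (j + n)) :
    homDiff dP dC n (f + g) = homDiff dP dC n f + homDiff dP dC n g := by
  ext j x
  simp only [homDiff_apply, Pi.add_apply, LinearMap.add_apply, map_add, smul_add]
  abel

lemma homDiff_sub (n : ℤ) (f g : ∀ j : ℤ, P j →ₗ[R] C (j + n)) :
    homDiff dP dC n (f - g) = homDiff dP dC n f - homDiff dP dC n g := by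
  rw [eq_sub_iff_add_eq, ← homDiff_add, sub_add_cancel]

lemma homDiff_homDiff (hP : IsCochainComplex dP) (hC : IsCochainComplex dC) (n : ℤ)
    (f : ∀ j : ℤ, P j →ₗ[R] C (j + n)) :
    homDiff dP dC (n + 1) (homDiff dP dC n f) = 0 := by
  ext j x
  simp only [homDiff_apply, map_sub, map_zsmul, diff_lcast, lcast_lcast, hP j x,
    hC (j + n) (f j x), map_zero, smul_zero, sub_zero, zero_sub, Int.negOnePow_succ,
    Units.val_neg, neg_smul, sub_neg_eq_add, Pi.zero_apply, LinearMap.zero_apply]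
  rw [map_neg, map_zsmul, lcast_lcast, neg_add_cancel]

lemma homDiff_postcomp {F : ∀ j : ℤ, A j →ₗ[R] C j} (hF : IsCochainMap dA dC F) (n : ℤ)
    (f : ∀ j : ℤ, P j →ₗ[R] A (j + n)) :
    homDiff dP dC n (postcomp F n f) = postcomp F (n + 1) (homDiff dP dA n f) := by
  ext j x
  simp only [postcomp, homDiff_apply, LinearMap.comp_apply, map_sub, map_zsmul, map_lcast F,
    hF (j + n)]

lemma homDiff_precomp {F : ∀ j : ℤ, Q j →ₗ[R] P j} (hF : IsCochainMap dQ dP F) (n : ℤ)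
    (f : ∀ j : ℤ, P j →ₗ[R] C (j + n)) :
    homDiff dQ dC n (precomp F n f) = precomp F (n + 1) (homDiff dP dC n f) := by
  ext j x
  simp only [precomp, homDiff_apply, LinearMap.comp_apply, hF j]

lemma postcomp_sub (F : ∀ j : ℤ, A j →ₗ[R] C j) (n : ℤ)
    (f g : ∀ j : ℤ, P j →ₗ[R] A (j + n)) :
    postcomp F n (f - g) = postcomp F n f - postcomp F n g := by
  ext j x
  exact map_sub (F (j + n)) (f j x) (g j x)

lemma postcomp_zero (F : ∀ j : ℤ, A j →ₗ[R] C j) (n : ℤ) :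
    postcomp F n (0 : ∀ j : ℤ, P j →ₗ[R] A (j + n)) = 0 :=
  funext fun j => LinearMap.comp_zero (F (j + n))

lemma postcomp_injective {F : ∀ j : ℤ, A j →ₗ[R] C j} (hF : ∀ j, Function.Injective (F j))
    (n : ℤ) :
    Function.Injective (postcomp F n : (∀ j : ℤ, P j →ₗ[R] A (j + n)) → _) :=
  fun _ _ h => funext fun j => (LinearMap.cancel_left (hF (j + n))).1 (congrFun h j)

lemma postcomp_surjective [∀ j, Module.Projective R (P j)] {F : ∀ j : ℤ, C j →ₗ[R] B j}
    (hF : ∀ j, Function.Surjective (F j)) (n : ℤ) :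
    Function.Surjective (postcomp F n : (∀ j : ℤ, P j →ₗ[R] C (j + n)) → _) := by
  intro g
  choose f hf using fun j =>
    Module.projective_lifting_property (F (j + n)) (g j) (hF (j + n))
  exact ⟨f, funext hf⟩

lemma exists_postcomp_eq_of_exact {i : ∀ j : ℤ, A j →ₗ[R] C j} {p : ∀ j : ℤ, C j →ₗ[R] B j}
    (hi : ∀ j, Function.Injective (i j)) (hip : ∀ j, Function.Exact (i j) (p j)) (n : ℤ)
    {f : ∀ j : ℤ, P j →ₗ[R] C (j + n)} (hf : postcomp p n f = 0) :
    ∃ e : ∀ j : ℤ, P j →ₗ[R] A (j + n), postcomp i n e = f := by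
  have f_mem_range (j : ℤ) (x : P j) : f j x ∈ LinearMap.range (i (j + n)) :=
    (hip (j + n) (f j x)).1 (LinearMap.congr_fun (congrFun hf j) x)
  refine ⟨fun j => (LinearEquiv.ofInjective (i (j + n)) (hi _)).symm.toLinearMap.comp
    ((f j).codRestrict _ (f_mem_range j)), ?_⟩
  ext j x
  exact congrArg Subtype.val ((LinearEquiv.ofInjective (i (j + n)) (hi _)).apply_symm_apply _)

theorem IsHomAcyclic.of_shortExact [∀ j, Module.Projective R (P j)]
    {i : ∀ j : ℤ, A j →ₗ[R] C j} {p : ∀ j : ℤ, C j →ₗ[R] B j}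
    (hP : IsCochainComplex dP) (hC : IsCochainComplex dC)
    (hdi : IsCochainMap dA dC i) (hdp : IsCochainMap dC dB p)
    (hi : ∀ j, Function.Injective (i j)) (hip : ∀ j, Function.Exact (i j) (p j))
    (hp : ∀ j, Function.Surjective (p j))
    (hA : IsHomAcyclic dP dA) (hB : IsHomAcyclic dP dB) : IsHomAcyclic dP dC := by
  intro n f hf
  obtain ⟨gB, hgB⟩ := hB n (postcomp p (n + 1) f) (by
    rw [homDiff_postcomp hdp, hf, postcomp_zero])
  obtain ⟨g, rfl⟩ := postcomp_surjective hp n gB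
  have postcomp_error_eq_zero : postcomp p (n + 1) (f - homDiff dP dC n g) = 0 := by
    rw [postcomp_sub, ← homDiff_postcomp hdp, hgB, sub_self]
  obtain ⟨e, he⟩ := exists_postcomp_eq_of_exact hi hip (n + 1) postcomp_error_eq_zero
  have e_cocycle : homDiff dP dA (n + 1) e = 0 := by
    apply postcomp_injective hi
    rw [← homDiff_postcomp hdi, he, homDiff_sub, hf, homDiff_homDiff hP hC, sub_zero,
      postcomp_zero]
  obtain ⟨h, rfl⟩ := hA n e e_cocycle
  refine ⟨g + postcomp i n h, ?_⟩
  rw [homDiff_add, homDiff_postcomp hdi, he, add_sub_cancel]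

theorem IsHomAcyclic.of_precomp_bijective {F : ∀ j : ℤ, Q j →ₗ[R] P j}
    (hdF : IsCochainMap dQ dP F)
    (hF : ∀ n, Function.Bijective (precomp F n : (∀ j : ℤ, P j →ₗ[R] C (j + n)) → _))
    (h : IsHomAcyclic dP dC) : IsHomAcyclic dQ dC := by
  intro n f hf
  obtain ⟨f, rfl⟩ := (hF (n + 1)).surjective f
  have f_cocycle : homDiff dP dC (n + 1) f = 0 := by
    apply (hF (n + 1 + 1)).injective
    rw [← homDiff_precomp hdF, hf]
    rfl
  obtain ⟨g, rfl⟩ := h n f f_cocycle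
  exact ⟨precomp F n g, homDiff_precomp hdF n g⟩

theorem IsHomAcyclic.exists_homotopy (h : IsHomAcyclic dP dC) {φ : ∀ j : ℤ, P j →ₗ[R] C j}
    (hφ : IsCochainMap dP dC φ) :
    ∃ s : ∀ j : ℤ, P (j + 1) →ₗ[R] C j,
      ∀ (j : ℤ) (x : P (j + 1)), φ (j + 1) x = dC j (s j x) + s (j + 1) (dP (j + 1) x) := by
  -- A morphism is a cocycle of degree `0 = -1 + 1`; a homotopy is a primitive of it.
  obtain ⟨g, hg⟩ := h (-1) (fun j => (lcast C (by omega : j = j + (-1 + 1))).comp (φ j)) (by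
    ext j x
    simp [homDiff_apply, diff_lcast, lcast_lcast, hφ j x])
  refine ⟨fun j => (lcast C (by omega : j + 1 + -1 = j)).comp (g (j + 1)), fun j x => ?_⟩
  have hgx := congrArg (lcast (R := R) C (by omega : j + 1 + (-1 + 1) = j + 1))
    (LinearMap.congr_fun (congrFun hg (j + 1)) x)
  simp only [homDiff_apply, LinearMap.comp_apply, map_sub, map_zsmul, lcast_lcast,
    lcast_self] at hgx
  simp [diff_lcast, ← hgx]

end HomComplex

section Reduction

variable {R : Type u} [Ring R] (t : R) (ht : t ∈ Subring.center R) (C : ℤ → Type u)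
  [∀ j, AddCommGroup (C j)] [∀ j, Module R (C j)]
  (dC : ∀ j : ℤ, C j →ₗ[R] C (j + 1))

/-- The projection `C → C ⧸ tC`. -/
def redProj (j : ℤ) : C j →ₗ[R] redMod t ht C j :=
  Submodule.mkQ (LinearMap.range (centralSmul t ht (C j)))

/-- The degree-`j` term `t C^j` of the subcomplex `tC`. -/
abbrev smulMod (j : ℤ) : Submodule R (C j) :=
  LinearMap.range (centralSmul t ht (C j))

variable {C}

/-- The restriction of the differential to the subcomplex `tC`. -/
def smulDiff (j : ℤ) : smulMod t ht C j →ₗ[R] smulMod t ht C (j + 1) :=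
  (dC j).restrict (by
    rintro _ ⟨y, rfl⟩
    exact ⟨dC j y, by simp⟩)

variable {t ht dC}

lemma mem_smulMod_iff {j : ℤ} {x : C j} : x ∈ smulMod t ht C j ↔ ∃ m, x = t • m := by
  simp only [LinearMap.mem_range, centralSmul_apply, eq_comm]

lemma redProj_surjective (j : ℤ) : Function.Surjective (redProj t ht C j) :=
  Submodule.mkQ_surjective _

lemma redProj_eq_zero_iff {j : ℤ} {x : C j} : redProj t ht C j x = 0 ↔ ∃ m, x = t • m :=
  (Submodule.Quotient.mk_eq_zero _).trans mem_smulMod_iff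

lemma isCochainMap_redProj : IsCochainMap dC (redDiff t ht C dC) (redProj t ht C) :=
  fun _ _ => rfl

lemma isCochainMap_subtype :
    IsCochainMap (smulDiff t ht dC) dC fun j => (smulMod t ht C j).subtype :=
  fun _ _ => rfl

lemma exact_subtype_redProj (j : ℤ) :
    Function.Exact (smulMod t ht C j).subtype (redProj t ht C j) :=
  LinearMap.exact_subtype_mkQ _

lemma IsCochainComplex.redDiff (hC : IsCochainComplex dC) :
    IsCochainComplex (redDiff t ht C dC) := by
  intro j x
  obtain ⟨y, rfl⟩ := redProj_surjective j x
  rw [← isCochainMap_redProj, ← isCochainMap_redProj, hC, map_zero]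

lemma IsCochainComplex.smulDiff (hC : IsCochainComplex dC) :
    IsCochainComplex (smulDiff t ht dC) :=
  fun j x => Subtype.ext (hC j x)

lemma smul_redMod_eq_zero {j : ℤ} (x : redMod t ht C j) : t • x = 0 := by
  obtain ⟨y, rfl⟩ := redProj_surjective j x
  rw [← map_smul, redProj_eq_zero_iff]
  exact ⟨y, rfl⟩

lemma smul_smulMod_eq_zero (ht2 : t ^ 2 = 0) {j : ℤ} (x : smulMod t ht C j) : t • x = 0 := by
  obtain ⟨_, y, rfl⟩ := x
  ext
  simp [smul_smul, ← pow_two, ht2]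

lemma isAcyclic_redDiff_iff :
    IsAcyclic (redDiff t ht C dC) ↔
      ∀ (j : ℤ) (x : C (j + 1)), (∃ m, dC (j + 1) x = t • m) →
        ∃ y : C j, ∃ m, dC j y - x = t • m := by
  simp only [IsAcyclic, (redProj_surjective _).forall, (redProj_surjective _).exists,
    ← isCochainMap_redProj _ _, redProj_eq_zero_iff, ← sub_eq_zero (b := redProj t ht C _ _),
    ← map_sub]

lemma isAcyclic_smulDiff_iff :
    IsAcyclic (smulDiff t ht dC) ↔
      ∀ (j : ℤ) (x : C (j + 1)), (∃ m, x = t • m) → dC (j + 1) x = 0 →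
        ∃ y : C j, (∃ m, y = t • m) ∧ dC j y = x := by
  simp only [IsAcyclic, Subtype.forall, Subtype.exists, ← mem_smulMod_iff (ht := ht),
    Subtype.ext_iff, smulDiff, LinearMap.restrict_apply, ZeroMemClass.coe_zero, exists_prop]

lemma precomp_redProj_bijective {D : ℤ → Type u} [∀ j, AddCommGroup (D j)]
    [∀ j, Module R (D j)] (hD : ∀ (j : ℤ) (x : D j), t • x = 0) (n : ℤ) :
    Function.Bijective
      (precomp (redProj t ht C) n : (∀ j : ℤ, redMod t ht C j →ₗ[R] D (j + n)) → _) := by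
  constructor
  · exact fun _ _ h => funext fun j =>
      (LinearMap.cancel_right (redProj_surjective j)).1 (congrFun h j)
  · intro f
    have smulMod_le_ker (j : ℤ) : smulMod t ht C j ≤ LinearMap.ker (f j) := by
      rintro _ ⟨y, rfl⟩
      simp [hD]
    exact ⟨fun j => (smulMod t ht C j).liftQ (f j) (smulMod_le_ker j),
      funext fun j => Submodule.liftQ_mkQ _ _ _⟩

theorem IsHomAcyclic.of_redDiff {D : ℤ → Type u} [∀ j, AddCommGroup (D j)]
    [∀ j, Module R (D j)] {dD : ∀ j : ℤ, D j →ₗ[R] D (j + 1)}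
    (hD : ∀ (j : ℤ) (x : D j), t • x = 0) (h : IsHomAcyclic (redDiff t ht C dC) dD) :
    IsHomAcyclic dC dD :=
  h.of_precomp_bijective isCochainMap_redProj (precomp_redProj_bijective hD)

theorem IsHomAcyclic.of_smulDiff_of_redDiff {P : ℤ → Type u} [∀ j, AddCommGroup (P j)]
    [∀ j, Module R (P j)] [∀ j, Module.Projective R (P j)]
    {dP : ∀ j : ℤ, P j →ₗ[R] P (j + 1)} (hP : IsCochainComplex dP) (hC : IsCochainComplex dC)
    (hsub : IsHomAcyclic dP (smulDiff t ht dC))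
    (hquot : IsHomAcyclic dP (redDiff t ht C dC)) : IsHomAcyclic dP dC :=
  .of_shortExact hP hC isCochainMap_subtype isCochainMap_redProj
    (fun _ => Submodule.subtype_injective _) exact_subtype_redProj redProj_surjective
    hsub hquot

end Reduction

/-- Let `R` be a ring, `t` central with `t² = 0`, and `R̄ = R/(t)` the
quotient by the two-sided ideal generated by `t` (presented by a surjective ring map
`π : R → S` whose kernel is `{r * t | r}`, which equals `{t * r | r}` as `t` is central).
Let `P` be a cochain complex of `R`-modules with each `P^j` projective, whose reduction
`P ⧸ tP` is homotopy projective over `R̄`: for every acyclic complex `C` of `R̄`-modules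
(an `R`-complex killed by `ker π`; `R`-linear maps from `P ⧸ tP` to such `C` are exactly
the `R̄`-linear ones) the Hom-complex `Hom(P ⧸ tP, C)` is acyclic.  Then for every complex
`M` of `R`-modules with `tM` and `M ⧸ tM` acyclic, the Hom-complex `Hom_R(P, M)` is
acyclic; in particular every morphism of complexes `P → M` is null-homotopic via an
`R`-linear chain homotopy. -/
theorem hom_complex_acyclic_of_gr_acyclic
    {R : Type u} [Ring R] (t : R) (ht : t ∈ Subring.center R) (ht2 : t ^ 2 = 0)
    (S : Type u) [Ring S] (π : R →+* S) (hπ : Function.Surjective π)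
    (hker : ∀ x : R, π x = 0 ↔ ∃ r : R, x = r * t)
    (P : ℤ → Type u) [∀ j, AddCommGroup (P j)] [∀ j, Module R (P j)]
    [∀ j, Module.Projective R (P j)]
    (dP : ∀ j : ℤ, P j →ₗ[R] P (j + 1))
    (hdP : ∀ (j : ℤ) (x : P j), dP (j + 1) (dP j x) = 0)
    -- `P ⧸ tP` is homotopy projective over `R̄`:
    (hhp : ∀ (C : ℤ → Type u) [∀ j, AddCommGroup (C j)] [∀ j, Module R (C j)]
      (dC : ∀ j : ℤ, C j →ₗ[R] C (j + 1)),
      (∀ (j : ℤ) (x : C j), dC (j + 1) (dC j x) = 0) →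
      (∀ a : R, π a = 0 → ∀ (j : ℤ) (x : C j), a • x = 0) →
      (∀ (j : ℤ) (x : C (j + 1)), dC (j + 1) x = 0 → ∃ y : C j, dC j y = x) →
      ∀ (n : ℤ) (f : ∀ j : ℤ, redMod t ht P j →ₗ[R] C (j + (n + 1))),
        homDiff (redDiff t ht P dP) dC (n + 1) f = 0 →
        ∃ g : ∀ j : ℤ, redMod t ht P j →ₗ[R] C (j + n),
          homDiff (redDiff t ht P dP) dC n g = f) :
    ∀ (M : ℤ → Type u) [∀ j, AddCommGroup (M j)] [∀ j, Module R (M j)]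
      (dM : ∀ j : ℤ, M j →ₗ[R] M (j + 1)),
      (∀ (j : ℤ) (x : M j), dM (j + 1) (dM j x) = 0) →
      -- the subcomplex `tM` is acyclic:
      (∀ (j : ℤ) (x : M (j + 1)), (∃ m, x = t • m) → dM (j + 1) x = 0 →
        ∃ y : M j, (∃ m, y = t • m) ∧ dM j y = x) →
      -- the quotient complex `M ⧸ tM` is acyclic:
      (∀ (j : ℤ) (x : M (j + 1)), (∃ m, dM (j + 1) x = t • m) →
        ∃ y : M j, ∃ m, dM j y - x = t • m) →
      -- the Hom-complex `Hom_R(P, M)` is acyclic: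
      ((∀ (n : ℤ) (f : ∀ j : ℤ, P j →ₗ[R] M (j + (n + 1))),
        homDiff dP dM (n + 1) f = 0 →
        ∃ g : ∀ j : ℤ, P j →ₗ[R] M (j + n), homDiff dP dM n g = f) ∧
      -- in particular, every morphism of complexes `P → M` is null-homotopic:
      (∀ (φ : ∀ j : ℤ, P j →ₗ[R] M j),
        (∀ (j : ℤ) (x : P j), φ (j + 1) (dP j x) = dM j (φ j x)) →
        ∃ h : ∀ j : ℤ, P (j + 1) →ₗ[R] M j,
          ∀ (j : ℤ) (x : P (j + 1)),
            φ (j + 1) x = dM j (h j x) + h (j + 1) (dP (j + 1) x))) := by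
  intro M _ _ dM hdM hsub hquot
  have hom_acyclic_of_smul_eq_zero (C : ℤ → Type u) [∀ j, AddCommGroup (C j)]
      [∀ j, Module R (C j)] (dC : ∀ j : ℤ, C j →ₗ[R] C (j + 1)) (hdC : IsCochainComplex dC)
      (htC : ∀ (j : ℤ) (x : C j), t • x = 0) (hC : IsAcyclic dC) : IsHomAcyclic dP dC := by
    have ker_smul_eq_zero (a : R) (ha : π a = 0) (j : ℤ) (x : C j) : a • x = 0 := by
      obtain ⟨r, rfl⟩ := (hker a).1 ha
      rw [mul_smul, htC, smul_zero]
    exact .of_redDiff htC (hhp C dC hdC ker_smul_eq_zero hC)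
  have hM : IsHomAcyclic dP dM := .of_smulDiff_of_redDiff (ht := ht) hdP hdM
    (hom_acyclic_of_smul_eq_zero _ _ (IsCochainComplex.smulDiff hdM)
      (fun _ => smul_smulMod_eq_zero ht2) (isAcyclic_smulDiff_iff.2 hsub))
    (hom_acyclic_of_smul_eq_zero _ _ (IsCochainComplex.redDiff hdM)
      (fun _ => smul_redMod_eq_zero) (isAcyclic_redDiff_iff.2 hquot))
  exact ⟨hM, fun _ hφ => hM.exists_homotopy hφ⟩
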